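/- Let Ĝ be the result of eliminating the function symbol f from the EUF formula G by the nested-ITE construction with fresh domain variables vf_1,...,vf_n. Any interpretation Ĵ of the symbols occurring in Ĝ can be extended to an interpretation J of the symbols occurring in both Ĝ and G such that for every subexpression E of G, J[E] = J[Ê] = Ĵ[Ê]. -/

import Mathlib

mutual
inductive EufTerm (Fn Pr : Type) : Type
  | app : Fn → List (EufTerm Fn Pr) → EufTerm Fn Pr
  | ite : EufFormula Fn Pr → EufTerm Fn Pr → EufTerm Fn Pr → EufTerm Fn Pr
inductive EufFormula (Fn Pr : Type) : Type
  | tt : EufFormula Fn Pr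
  | ff : EufFormula Fn Pr
  | not : EufFormula Fn Pr → EufFormula Fn Pr
  | and : EufFormula Fn Pr → EufFormula Fn Pr → EufFormula Fn Pr
  | or : EufFormula Fn Pr → EufFormula Fn Pr → EufFormula Fn Pr
  | eq : EufTerm Fn Pr → EufTerm Fn Pr → EufFormula Fn Pr
  | papp : Pr → List (EufTerm Fn Pr) → EufFormula Fn Pr
end

structure Interp (Fn Pr : Type) (D : Type u) where
  fn : Fn → List D → D
  pr : Pr → List D → Bool

open Classical in
mutual
noncomputable def evalT {Fn Pr : Type} {D : Type} (I : Interp Fn Pr D) : EufTerm Fn Pr → D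
  | .app f args => I.fn f (args.attach.map (fun t => evalT I t.1))
  | .ite G T1 T2 => if evalF I G then evalT I T1 else evalT I T2
termination_by t => sizeOf t
decreasing_by
  all_goals simp_wf
  all_goals try omega
  all_goals (have := List.sizeOf_lt_of_mem t.2; omega)
noncomputable def evalF {Fn Pr : Type} {D : Type} (I : Interp Fn Pr D) : EufFormula Fn Pr → Bool
  | .tt => true
  | .ff => false
  | .not G => !evalF I G
  | .and G1 G2 => evalF I G1 && evalF I G2
  | .or G1 G2 => evalF I G1 || evalF I G2
  | .eq T1 T2 => decide (evalT I T1 = evalT I T2)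
  | .papp p args => I.pr p (args.attach.map (fun t => evalT I t.1))
termination_by g => sizeOf g
decreasing_by
  all_goals simp_wf
  all_goals try omega
  all_goals (have := List.sizeOf_lt_of_mem t.2; omega)
end
def ValidOn {Fn Pr : Type} (F : EufFormula Fn Pr) (D : Type) : Prop :=
  ∀ I : Interp Fn Pr D, evalF I F = true

def UniversallyValid {Fn Pr : Type} (F : EufFormula Fn Pr) : Prop :=
  ∀ D : Type, Nonempty D → ValidOn F D

/-- Expressions: terms or formulas. -/
inductive EufExpr (Fn Pr : Type) : Type
  | t : EufTerm Fn Pr → EufExpr Fn Pr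
  | f : EufFormula Fn Pr → EufExpr Fn Pr

/-- Immediate (proper) subexpression relation. -/
inductive ImmSub {Fn Pr : Type} : EufExpr Fn Pr → EufExpr Fn Pr → Prop
  | appArg {g : Fn} {args : List (EufTerm Fn Pr)} {T : EufTerm Fn Pr} :
      T ∈ args → ImmSub (.t T) (.t (.app g args))
  | iteC {G : EufFormula Fn Pr} {T1 T2 : EufTerm Fn Pr} : ImmSub (.f G) (.t (.ite G T1 T2))
  | ite1 {G : EufFormula Fn Pr} {T1 T2 : EufTerm Fn Pr} : ImmSub (.t T1) (.t (.ite G T1 T2))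
  | ite2 {G : EufFormula Fn Pr} {T1 T2 : EufTerm Fn Pr} : ImmSub (.t T2) (.t (.ite G T1 T2))
  | not {G : EufFormula Fn Pr} : ImmSub (.f G) (.f (.not G))
  | andL {G1 G2 : EufFormula Fn Pr} : ImmSub (.f G1) (.f (.and G1 G2))
  | andR {G1 G2 : EufFormula Fn Pr} : ImmSub (.f G2) (.f (.and G1 G2))
  | orL {G1 G2 : EufFormula Fn Pr} : ImmSub (.f G1) (.f (.or G1 G2))
  | orR {G1 G2 : EufFormula Fn Pr} : ImmSub (.f G2) (.f (.or G1 G2))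
  | eqL {T1 T2 : EufTerm Fn Pr} : ImmSub (.t T1) (.f (.eq T1 T2))
  | eqR {T1 T2 : EufTerm Fn Pr} : ImmSub (.t T2) (.f (.eq T1 T2))
  | pappArg {p : Pr} {args : List (EufTerm Fn Pr)} {T : EufTerm Fn Pr} :
      T ∈ args → ImmSub (.t T) (.f (.papp p args))

/-- `SubExpr a b`: `a` occurs (as a subexpression) in `b`. -/
def SubExpr {Fn Pr : Type} (a b : EufExpr Fn Pr) : Prop := Relation.ReflTransGen ImmSub a b

def TermInT {Fn Pr : Type} (T S : EufTerm Fn Pr) : Prop := SubExpr (.t T) (.t S)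
def TermInF {Fn Pr : Type} (T : EufTerm Fn Pr) (F : EufFormula Fn Pr) : Prop :=
  SubExpr (.t T) (.f F)
def FormulaInT {Fn Pr : Type} (G : EufFormula Fn Pr) (S : EufTerm Fn Pr) : Prop :=
  SubExpr (.f G) (.t S)
def FormulaInF {Fn Pr : Type} (G F : EufFormula Fn Pr) : Prop := SubExpr (.f G) (.f F)

def IsAppTerm {Fn Pr : Type} : EufTerm Fn Pr → Prop
  | .app _ _ => True
  | _ => False

/-- `𝒯(F)`: the function application terms occurring in `F`. -/
def AppTermsF {Fn Pr : Type} (F : EufFormula Fn Pr) : Set (EufTerm Fn Pr) :=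
  {T | IsAppTerm T ∧ TermInF T F}

/-- A function symbol occurs in `F` when some application of it occurs in `F`. -/
def FnInF {Fn Pr : Type} (g : Fn) (F : EufFormula Fn Pr) : Prop :=
  ∃ args, TermInF (EufTerm.app g args) F

def PrInF {Fn Pr : Type} (p : Pr) (F : EufFormula Fn Pr) : Prop :=
  ∃ args, FormulaInF (EufFormula.papp p args) F

/-- `I` is diverse for `F` with respect to the set `Sg` of function symbols. -/
def DiverseFor {Fn Pr D : Type} (I : Interp Fn Pr D) (F : EufFormula Fn Pr)
    (Sg : Set Fn) : Prop :=
  ∀ (g : Fn) (args : List (EufTerm Fn Pr)), g ∈ Sg →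
    TermInF (EufTerm.app g args) F →
    ∀ T2 ∈ AppTermsF F, evalT I (EufTerm.app g args) = evalT I T2 →
      ∃ args2, T2 = EufTerm.app g args2 ∧
        List.Forall₂ (fun a b => evalT I a = evalT I b) args args2

mutual
/-- PEUF g-terms, where `isP` designates the p-function symbols. -/
inductive IsGTerm {Fn Pr : Type} (isP : Fn → Prop) : EufTerm Fn Pr → Prop
  | ite {G : EufFormula Fn Pr} {T1 T2 : EufTerm Fn Pr} :
      IsGFormula isP G → IsGTerm isP T1 → IsGTerm isP T2 → IsGTerm isP (.ite G T1 T2)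
  | app {g : Fn} {args : List (EufTerm Fn Pr)} :
      ¬ isP g → (∀ T ∈ args, IsPTerm isP T) → IsGTerm isP (.app g args)
/-- PEUF p-terms. -/
inductive IsPTerm {Fn Pr : Type} (isP : Fn → Prop) : EufTerm Fn Pr → Prop
  | g {T : EufTerm Fn Pr} : IsGTerm isP T → IsPTerm isP T
  | ite {G : EufFormula Fn Pr} {T1 T2 : EufTerm Fn Pr} :
      IsGFormula isP G → IsPTerm isP T1 → IsPTerm isP T2 → IsPTerm isP (.ite G T1 T2)
  | app {g : Fn} {args : List (EufTerm Fn Pr)} :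
      isP g → (∀ T ∈ args, IsPTerm isP T) → IsPTerm isP (.app g args)
/-- PEUF g-formulas. -/
inductive IsGFormula {Fn Pr : Type} (isP : Fn → Prop) : EufFormula Fn Pr → Prop
  | tt : IsGFormula isP .tt
  | ff : IsGFormula isP .ff
  | not {G : EufFormula Fn Pr} : IsGFormula isP G → IsGFormula isP (.not G)
  | and {G1 G2 : EufFormula Fn Pr} :
      IsGFormula isP G1 → IsGFormula isP G2 → IsGFormula isP (.and G1 G2)
  | or {G1 G2 : EufFormula Fn Pr} :
      IsGFormula isP G1 → IsGFormula isP G2 → IsGFormula isP (.or G1 G2)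
  | eq {T1 T2 : EufTerm Fn Pr} :
      IsGTerm isP T1 → IsGTerm isP T2 → IsGFormula isP (.eq T1 T2)
  | papp {p : Pr} {args : List (EufTerm Fn Pr)} :
      (∀ T ∈ args, IsPTerm isP T) → IsGFormula isP (.papp p args)
/-- PEUF p-formulas. -/
inductive IsPFormula {Fn Pr : Type} (isP : Fn → Prop) : EufFormula Fn Pr → Prop
  | g {G : EufFormula Fn Pr} : IsGFormula isP G → IsPFormula isP G
  | and {G1 G2 : EufFormula Fn Pr} :
      IsPFormula isP G1 → IsPFormula isP G2 → IsPFormula isP (.and G1 G2)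
  | or {G1 G2 : EufFormula Fn Pr} :
      IsPFormula isP G1 → IsPFormula isP G2 → IsPFormula isP (.or G1 G2)
  | eq {T1 T2 : EufTerm Fn Pr} :
      IsPTerm isP T1 → IsPTerm isP T2 → IsPFormula isP (.eq T1 T2)
end

/-- The p-function symbols occurring in `F`. -/
def PSymbolsIn {Fn Pr : Type} (isP : Fn → Prop) (F : EufFormula Fn Pr) : Set Fn :=
  {g | isP g ∧ FnInF g F}

/-- `I` is maximally diverse for the p-formula `F`. -/
def MaxDiverse {Fn Pr D : Type} (isP : Fn → Prop) (I : Interp Fn Pr D)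
    (F : EufFormula Fn Pr) : Prop :=
  DiverseFor I F (PSymbolsIn isP F)

/-- `I'` refines `I` on the term set `Ts`. -/
def RefinesOn {Fn Pr D D' : Type} (I' : Interp Fn Pr D') (I : Interp Fn Pr D)
    (Ts : Set (EufTerm Fn Pr)) : Prop :=
  ∀ T1 ∈ Ts, ∀ T2 ∈ Ts, evalT I' T1 = evalT I' T2 → evalT I T1 = evalT I T2

def ProperRefinesOn {Fn Pr D D' : Type} (I' : Interp Fn Pr D') (I : Interp Fn Pr D)
    (Ts : Set (EufTerm Fn Pr)) : Prop :=
  RefinesOn I' I Ts ∧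
    ∃ T1 ∈ Ts, ∃ T2 ∈ Ts, evalT I T1 = evalT I T2 ∧ evalT I' T1 ≠ evalT I' T2
open Classical in
mutual
/-- Substitute the term `B` for each instance of the term `A`. -/
noncomputable def substT {Fn Pr : Type} (A B : EufTerm Fn Pr) : EufTerm Fn Pr → EufTerm Fn Pr
  | .app g args =>
      if EufTerm.app g args = A then B
      else .app g (args.attach.map (fun t => substT A B t.1))
  | .ite G T1 T2 =>
      if EufTerm.ite G T1 T2 = A then B
      else .ite (substF A B G) (substT A B T1) (substT A B T2)
termination_by t => sizeOf t
decreasing_by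
  all_goals simp_wf
  all_goals try omega
  all_goals (have := List.sizeOf_lt_of_mem t.2; omega)
noncomputable def substF {Fn Pr : Type} (A B : EufTerm Fn Pr) : EufFormula Fn Pr → EufFormula Fn Pr
  | .tt => .tt
  | .ff => .ff
  | .not G => .not (substF A B G)
  | .and G1 G2 => .and (substF A B G1) (substF A B G2)
  | .or G1 G2 => .or (substF A B G1) (substF A B G2)
  | .eq T1 T2 => .eq (substT A B T1) (substT A B T2)
  | .papp p args => .papp p (args.attach.map (fun t => substT A B t.1))
termination_by g => sizeOf g
decreasing_by
  all_goals simp_wf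
  all_goals try omega
  all_goals (have := List.sizeOf_lt_of_mem t.2; omega)
end

open Classical in
mutual
/-- Substitute the formula `B` for each instance of the formula `A` inside a term. -/
noncomputable def fsubstT {Fn Pr : Type} (A B : EufFormula Fn Pr) : EufTerm Fn Pr → EufTerm Fn Pr
  | .app g args => .app g (args.attach.map (fun t => fsubstT A B t.1))
  | .ite G T1 T2 => .ite (fsubstF A B G) (fsubstT A B T1) (fsubstT A B T2)
termination_by t => sizeOf t
decreasing_by
  all_goals simp_wf
  all_goals try omega
  all_goals (have := List.sizeOf_lt_of_mem t.2; omega)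
/-- Substitute the formula `B` for each instance of the formula `A`. -/
noncomputable def fsubstF {Fn Pr : Type} (A B : EufFormula Fn Pr) : EufFormula Fn Pr → EufFormula Fn Pr
  | .tt => if EufFormula.tt = A then B else .tt
  | .ff => if EufFormula.ff = A then B else .ff
  | .not G => if EufFormula.not G = A then B else .not (fsubstF A B G)
  | .and G1 G2 => if EufFormula.and G1 G2 = A then B else .and (fsubstF A B G1) (fsubstF A B G2)
  | .or G1 G2 => if EufFormula.or G1 G2 = A then B else .or (fsubstF A B G1) (fsubstF A B G2)
  | .eq T1 T2 => if EufFormula.eq T1 T2 = A then B else .eq (fsubstT A B T1) (fsubstT A B T2)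
  | .papp p args =>
      if EufFormula.papp p args = A then B
      else .papp p (args.attach.map (fun t => fsubstT A B t.1))
termination_by g => sizeOf g
decreasing_by
  all_goals simp_wf
  all_goals try omega
  all_goals (have := List.sizeOf_lt_of_mem t.2; omega)
end
/-- The formula `C_{i,j}`: conjunction of the equations between transformed arguments. -/
def Cform {Fn Pr : Type} (hatS : ℕ → ℕ → EufTerm Fn Pr) (k i j : ℕ) : EufFormula Fn Pr :=
  ((List.range' 1 k).map (fun l => EufFormula.eq (hatS i l) (hatS j l))).foldr .and .tt

/-- The nested-ITE term `V_{i,j}`. -/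
def Vterm {Fn Pr : Type} (vf : ℕ → Fn) (hatS : ℕ → ℕ → EufTerm Fn Pr) (k i : ℕ) :
    ℕ → EufTerm Fn Pr
  | j =>
    if h : j < i then
      .ite (Cform hatS k i j) (.app (vf j) []) (Vterm vf hatS k i (j+1))
    else .app (vf i) []
termination_by j => i - j
decreasing_by omega

/-- The nested-ITE term `U_i` replacing the i-th f-application. -/
def Uterm {Fn Pr : Type} (vf : ℕ → Fn) (hatS : ℕ → ℕ → EufTerm Fn Pr) (k i : ℕ) :
    EufTerm Fn Pr :=
  Vterm vf hatS k i 1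

/-- `stepT … i E = E⁽ⁱ⁾` for terms. -/
noncomputable def stepT {Fn Pr : Type} (Ts : ℕ → EufTerm Fn Pr) (vf : ℕ → Fn)
    (hatS : ℕ → ℕ → EufTerm Fn Pr) (k : ℕ) : ℕ → EufTerm Fn Pr → EufTerm Fn Pr
  | 0, E => E
  | i+1, E =>
      substT (stepT Ts vf hatS k i (Ts (i+1))) (Uterm vf hatS k (i+1)) (stepT Ts vf hatS k i E)

/-- `stepF … i E = E⁽ⁱ⁾` for formulas. -/
noncomputable def stepF {Fn Pr : Type} (Ts : ℕ → EufTerm Fn Pr) (vf : ℕ → Fn)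
    (hatS : ℕ → ℕ → EufTerm Fn Pr) (k : ℕ) : ℕ → EufFormula Fn Pr → EufFormula Fn Pr
  | 0, E => E
  | i+1, E =>
      substF (stepT Ts vf hatS k i (Ts (i+1))) (Uterm vf hatS k (i+1)) (stepF Ts vf hatS k i E)

/-- The f-order of a term: the largest index `i ∈ [1,n]` with `Ts i` occurring in `E`. -/
noncomputable def fordT {Fn Pr : Type} (n : ℕ) (Ts : ℕ → EufTerm Fn Pr)
    (E : EufTerm Fn Pr) : ℕ :=
  sSup {i | 1 ≤ i ∧ i ≤ n ∧ TermInT (Ts i) E}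

/-- The f-order of a formula. -/
noncomputable def fordF {Fn Pr : Type} (n : ℕ) (Ts : ℕ → EufTerm Fn Pr)
    (E : EufFormula Fn Pr) : ℕ :=
  sSup {i | 1 ≤ i ∧ i ≤ n ∧ TermInF (Ts i) E}

/-- `Ê` for terms: `E⁽ᵐ⁾` where `m` is the f-order of `E`. -/
noncomputable def hatT {Fn Pr : Type} (n : ℕ) (Ts : ℕ → EufTerm Fn Pr) (vf : ℕ → Fn)
    (hatS : ℕ → ℕ → EufTerm Fn Pr) (k : ℕ) (E : EufTerm Fn Pr) : EufTerm Fn Pr :=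
  stepT Ts vf hatS k (fordT n Ts E) E

/-- `Ê` for formulas. -/
noncomputable def hatF {Fn Pr : Type} (n : ℕ) (Ts : ℕ → EufTerm Fn Pr) (vf : ℕ → Fn)
    (hatS : ℕ → ℕ → EufTerm Fn Pr) (k : ℕ) (E : EufFormula Fn Pr) : EufFormula Fn Pr :=
  stepF Ts vf hatS k (fordF n Ts E) E

/-- Hypotheses of the nested-ITE elimination of the function symbol `f` from `G`:
`Ts 1, …, Ts n` are the syntactically distinct f-application terms of `G` (ordered so that
subterms precede superterms) with argument terms `S i 1, …, S i k`; the `vf i` are fresh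
domain variables; and `hatS i l` is the transformed argument term `Ŝ_{i,l}`. -/
structure ElimHyps {Fn Pr : Type} (G : EufFormula Fn Pr) (f : Fn) (k n : ℕ)
    (Ts : ℕ → EufTerm Fn Pr) (S : ℕ → ℕ → EufTerm Fn Pr) (vf : ℕ → Fn)
    (hatS : ℕ → ℕ → EufTerm Fn Pr) : Prop where
  k_pos : 1 ≤ k
  ts_app : ∀ i, 1 ≤ i → i ≤ n → Ts i = EufTerm.app f ((List.range' 1 k).map (S i))
  ts_occurs : ∀ i, 1 ≤ i → i ≤ n → TermInF (Ts i) G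
  ts_distinct : ∀ i j, 1 ≤ i → i ≤ n → 1 ≤ j → j ≤ n → Ts i = Ts j → i = j
  ts_complete : ∀ args, TermInF (EufTerm.app f args) G →
      ∃ i, 1 ≤ i ∧ i ≤ n ∧ EufTerm.app f args = Ts i
  ts_order : ∀ i j, 1 ≤ i → i ≤ n → 1 ≤ j → j ≤ n → TermInT (Ts i) (Ts j) → i ≠ j → i < j
  vf_fresh : ∀ i, 1 ≤ i → i ≤ n → ¬ FnInF (vf i) G
  vf_inj : ∀ i j, 1 ≤ i → i ≤ n → 1 ≤ j → j ≤ n → vf i = vf j → i = j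
  vf_ne_f : ∀ i, 1 ≤ i → i ≤ n → vf i ≠ f
  hatS_spec : ∀ j l, 1 ≤ j → j ≤ n → 1 ≤ l → l ≤ k →
      hatS j l = stepT Ts vf hatS k (fordT n Ts (S j l)) (S j l)

/-- `Ĝ = G⁽ⁿ⁾`: the result of eliminating `f` from `G`. -/
noncomputable def elimResult {Fn Pr : Type} (G : EufFormula Fn Pr) (n : ℕ)
    (Ts : ℕ → EufTerm Fn Pr) (vf : ℕ → Fn) (hatS : ℕ → ℕ → EufTerm Fn Pr) (k : ℕ) :
    EufFormula Fn Pr :=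
  stepF Ts vf hatS k n G

section helpers
variable {Fn Pr D : Type}

theorem euf_ind (P : EufTerm Fn Pr → Prop) (Q : EufFormula Fn Pr → Prop)
    (happ : ∀ g args, (∀ T ∈ args, P T) → P (.app g args))
    (hite : ∀ F A B, Q F → P A → P B → P (.ite F A B))
    (htt : Q .tt) (hff : Q .ff) (hnot : ∀ F, Q F → Q (.not F))
    (hand : ∀ A B, Q A → Q B → Q (.and A B))
    (hor : ∀ A B, Q A → Q B → Q (.or A B))
    (heq : ∀ A B, P A → P B → Q (.eq A B))
    (hpapp : ∀ p args, (∀ T ∈ args, P T) → Q (.papp p args)) :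
    (∀ T, P T) ∧ (∀ F, Q F) := by
  constructor
  · intro T
    refine EufTerm.rec (motive_1 := P) (motive_2 := Q) (motive_3 := fun l => ∀ T ∈ l, P T)
      happ hite htt hff hnot hand hor heq hpapp (by simp) ?_ T
    intro a l ha hl T hT
    rcases List.mem_cons.1 hT with rfl | h
    · exact ha
    · exact hl _ h
  · intro F
    refine EufFormula.rec (motive_1 := P) (motive_2 := Q) (motive_3 := fun l => ∀ T ∈ l, P T)
      happ hite htt hff hnot hand hor heq hpapp (by simp) ?_ F
    intro a l ha hl T hT
    rcases List.mem_cons.1 hT with rfl | h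
    · exact ha
    · exact hl _ h

theorem evalT_app (I : Interp Fn Pr D) (g args) :
    evalT I (.app g args) = I.fn g (args.map (evalT I)) := by
  rw [evalT]; simp
theorem evalF_papp (I : Interp Fn Pr D) (g args) :
    evalF I (.papp g args) = I.pr g (args.map (evalT I)) := by
  rw [evalF]; simp
open Classical in
theorem substT_app (A B : EufTerm Fn Pr) (g args) :
    substT A B (.app g args) =
      if EufTerm.app g args = A then B else .app g (args.map (substT A B)) := by
  rw [substT]; simp
theorem substF_papp (A B : EufTerm Fn Pr) (g args) :
    substF A B (.papp g args) = .papp g (args.map (substT A B)) := by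
  rw [substF]; simp

theorem eval_subst (I : Interp Fn Pr D) (A B : EufTerm Fn Pr) (h : evalT I A = evalT I B) :
    (∀ T, evalT I (substT A B T) = evalT I T) ∧ (∀ F, evalF I (substF A B F) = evalF I F) := by
  apply euf_ind
  · intro g args ih
    rw [substT_app]
    split_ifs with hA
    · rw [hA, h]
    · rw [evalT_app, evalT_app, List.map_map]
      congr 1
      exact List.map_congr_left ih
  · intro F X Y hF hX hY
    rw [substT]
    split_ifs with hA
    · rw [hA, h]
    · simp only [evalT, hF, hX, hY]
  · simp [substF]
  · simp [substF]
  · intro F hF; simp only [substF, evalF, hF]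
  · intro X Y hX hY; simp only [substF, evalF, hX, hY]
  · intro X Y hX hY; simp only [substF, evalF, hX, hY]
  · intro X Y hX hY; rw [substF, evalF, evalF, hX, hY]
  · intro g args ih
    rw [substF_papp, evalF_papp, evalF_papp, List.map_map]
    congr 1
    exact List.map_congr_left ih

theorem sub_child {a b c : EufExpr Fn Pr} (h : SubExpr a b) (h' : ImmSub b c) : SubExpr a c :=
  Relation.ReflTransGen.tail h h'

theorem sub_cases {a c : EufExpr Fn Pr} (h : SubExpr a c) :
    a = c ∨ ∃ b, SubExpr a b ∧ ImmSub b c := by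
  rcases Relation.ReflTransGen.cases_tail h with h | ⟨b, h1, h2⟩
  · exact Or.inl h.symm
  · exact Or.inr ⟨b, h1, h2⟩

/-- No `f`-application occurs. -/
def Free (f : Fn) (e : EufExpr Fn Pr) : Prop := ∀ args, ¬ SubExpr (.t (.app f args)) e

theorem Free.child {f : Fn} {e e' : EufExpr Fn Pr} (h : Free f e) (h' : ImmSub e' e) :
    Free f e' := fun args hs => h args (sub_child hs h')

theorem Free.mk' {f : Fn} {e : EufExpr Fn Pr} (h : ∀ e', ImmSub e' e → Free f e')
    (h0 : ∀ args, e ≠ .t (.app f args)) : Free f e := by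
  intro args hs
  rcases sub_cases hs with h1 | ⟨b, h1, h2⟩
  · exact h0 args h1.symm
  · exact h b h2 args h1

theorem eval_free (f : Fn) (I J : Interp Fn Pr D) (hfn : ∀ g, g ≠ f → I.fn g = J.fn g)
    (hpr : I.pr = J.pr) :
    (∀ T : EufTerm Fn Pr, Free f (.t T) → evalT I T = evalT J T) ∧
    (∀ F : EufFormula Fn Pr, Free f (.f F) → evalF I F = evalF J F) := by
  apply euf_ind
  · intro g args ih h
    have hg : g ≠ f := by rintro rfl; exact h args .refl
    rw [evalT_app, evalT_app, hfn g hg]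
    congr 1
    exact List.map_congr_left fun T hT => ih T hT (h.child (.appArg hT))
  · intro F X Y hF hX hY h
    simp only [evalT, hF (h.child .iteC), hX (h.child .ite1), hY (h.child .ite2)]
  · simp [evalF]
  · simp [evalF]
  · intro F hF h; simp only [evalF, hF (h.child .not)]
  · intro X Y hX hY h; simp only [evalF, hX (h.child .andL), hY (h.child .andR)]
  · intro X Y hX hY h; simp only [evalF, hX (h.child .orL), hY (h.child .orR)]
  · intro X Y hX hY h; rw [evalF, evalF, hX (h.child .eqL), hY (h.child .eqR)]
  · intro g args ih h
    rw [evalF_papp, evalF_papp, hpr]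
    congr 1
    exact List.map_congr_left fun T hT => ih T hT (h.child (.pappArg hT))

theorem subst_app_sub (f : Fn) (A B : EufTerm Fn Pr) (hB : Free f (.t B)) :
    (∀ E : EufTerm Fn Pr, ∀ args, SubExpr (.t (.app f args)) (.t (substT A B E)) →
      ∃ args', SubExpr (.t (.app f args')) (.t E) ∧ EufTerm.app f args' ≠ A ∧
        EufTerm.app f args = substT A B (.app f args')) ∧
    (∀ E : EufFormula Fn Pr, ∀ args, SubExpr (.t (.app f args)) (.f (substF A B E)) →
      ∃ args', SubExpr (.t (.app f args')) (.f E) ∧ EufTerm.app f args' ≠ A ∧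
        EufTerm.app f args = substT A B (.app f args')) := by
  apply euf_ind
  · intro g args ih args1 h
    rw [substT_app] at h
    split_ifs at h with hA
    · exact absurd h (hB _)
    · rcases sub_cases h with h1 | ⟨b, h1, h2⟩
      · injection h1 with h1
        have h3 := h1
        injection h1 with h1 h2
        subst h1
        refine ⟨args, .refl, hA, ?_⟩
        rw [substT_app, if_neg hA, h2]
      · cases h2 with
        | appArg hT =>
          obtain ⟨T, hT', rfl⟩ := List.mem_map.1 hT
          obtain ⟨a', h3, h4⟩ := ih T hT' _ h1
          exact ⟨a', sub_child h3 (.appArg hT'), h4⟩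
  · intro F X Y hF hX hY args1 h
    rw [substT] at h
    split_ifs at h with hA
    · exact absurd h (hB _)
    · rcases sub_cases h with h1 | ⟨b, h1, h2⟩
      · simp at h1
      · cases h2 with
        | iteC => obtain ⟨a', h3, h4⟩ := hF _ h1; exact ⟨a', sub_child h3 .iteC, h4⟩
        | ite1 => obtain ⟨a', h3, h4⟩ := hX _ h1; exact ⟨a', sub_child h3 .ite1, h4⟩
        | ite2 => obtain ⟨a', h3, h4⟩ := hY _ h1; exact ⟨a', sub_child h3 .ite2, h4⟩
  · intro args h
    rw [substF] at h
    rcases sub_cases h with h1 | ⟨b, h1, h2⟩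
    · simp at h1
    · cases h2
  · intro args h
    rw [substF] at h
    rcases sub_cases h with h1 | ⟨b, h1, h2⟩
    · simp at h1
    · cases h2
  · intro F hF args h
    rw [substF] at h
    rcases sub_cases h with h1 | ⟨b, h1, h2⟩
    · simp at h1
    · cases h2 with
      | not => obtain ⟨a', h3, h4⟩ := hF _ h1; exact ⟨a', sub_child h3 .not, h4⟩
  · intro X Y hX hY args h
    rw [substF] at h
    rcases sub_cases h with h1 | ⟨b, h1, h2⟩
    · simp at h1
    · cases h2 with
      | andL => obtain ⟨a', h3, h4⟩ := hX _ h1; exact ⟨a', sub_child h3 .andL, h4⟩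
      | andR => obtain ⟨a', h3, h4⟩ := hY _ h1; exact ⟨a', sub_child h3 .andR, h4⟩
  · intro X Y hX hY args h
    rw [substF] at h
    rcases sub_cases h with h1 | ⟨b, h1, h2⟩
    · simp at h1
    · cases h2 with
      | orL => obtain ⟨a', h3, h4⟩ := hX _ h1; exact ⟨a', sub_child h3 .orL, h4⟩
      | orR => obtain ⟨a', h3, h4⟩ := hY _ h1; exact ⟨a', sub_child h3 .orR, h4⟩
  · intro X Y hX hY args h
    rw [substF] at h
    rcases sub_cases h with h1 | ⟨b, h1, h2⟩
    · simp at h1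
    · cases h2 with
      | eqL => obtain ⟨a', h3, h4⟩ := hX _ h1; exact ⟨a', sub_child h3 .eqL, h4⟩
      | eqR => obtain ⟨a', h3, h4⟩ := hY _ h1; exact ⟨a', sub_child h3 .eqR, h4⟩
  · intro g args ih args1 h
    rw [substF_papp] at h
    rcases sub_cases h with h1 | ⟨b, h1, h2⟩
    · simp at h1
    · cases h2 with
      | pappArg hT =>
        obtain ⟨T, hT', rfl⟩ := List.mem_map.1 hT
        obtain ⟨a', h3, h4⟩ := ih T hT' _ h1
        exact ⟨a', sub_child h3 (.pappArg hT'), h4⟩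

/-- Size of an expression. -/
noncomputable def esize : EufExpr Fn Pr → ℕ
  | .t T => sizeOf T
  | .f F => sizeOf F

theorem imm_size {a b : EufExpr Fn Pr} (h : ImmSub a b) : esize a < esize b := by
  cases h with
  | appArg h => have := List.sizeOf_lt_of_mem h; simp [esize]; omega
  | pappArg h => have := List.sizeOf_lt_of_mem h; simp [esize]; omega
  | _ => simp [esize] <;> omega

theorem sub_size {a b : EufExpr Fn Pr} (h : SubExpr a b) : esize a ≤ esize b := by
  induction h with
  | refl => exact le_rfl
  | tail _ h ih => exact ih.trans (imm_size h).le

theorem free_Cform (f : Fn) (hatS : ℕ → ℕ → EufTerm Fn Pr) (k i j : ℕ)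
    (h : ∀ l, 1 ≤ l → l ≤ k → Free f (.t (hatS i l)) ∧ Free f (.t (hatS j l))) :
    Free f (.f (Cform hatS k i j)) := by
  unfold Cform
  have h' : ∀ l ∈ List.range' 1 k, Free f (.t (hatS i l)) ∧ Free f (.t (hatS j l)) := by
    intro l hl
    rw [List.mem_range'_1] at hl
    exact h l (by omega) (by omega)
  generalize List.range' 1 k = L at h'
  induction L with
  | nil =>
    apply Free.mk'
    · intro e he; cases he
    · simp
  | cons a L ih =>
    have ih' := ih (fun l hl => h' l (List.mem_cons_of_mem _ hl))
    have ha := h' a List.mem_cons_self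
    apply Free.mk'
    · intro e he
      cases he with
      | andL =>
        apply Free.mk'
        · intro e he
          cases he with
          | eqL => exact ha.1
          | eqR => exact ha.2
        · simp
      | andR => exact ih'
    · simp

theorem free_Vterm (f : Fn) (vf : ℕ → Fn) (hatS : ℕ → ℕ → EufTerm Fn Pr) (k i : ℕ)
    (hv : ∀ j, 1 ≤ j → j ≤ i → vf j ≠ f)
    (h : ∀ j l, 1 ≤ j → j ≤ i → 1 ≤ l → l ≤ k → Free f (.t (hatS j l))) (d : ℕ) :
    ∀ j, 1 ≤ j → j ≤ i → i - j = d → Free f (.t (Vterm vf hatS k i j)) := by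
  have hvar : ∀ j, 1 ≤ j → j ≤ i → Free f (.t (EufTerm.app (vf j) [] : EufTerm Fn Pr)) := by
    intro j h1 h2
    apply Free.mk'
    · intro e he
      cases he with
      | appArg h => cases h
    · intro args hh
      injection hh with hh
      injection hh with hh
      exact hv j h1 h2 hh
  induction d with
  | zero =>
    intro j h1 h2 h3
    rw [Vterm, dif_neg (by omega)]
    exact hvar i (by omega) le_rfl
  | succ d ih =>
    intro j h1 h2 h3
    rw [Vterm, dif_pos (by omega)]
    apply Free.mk'
    · intro e he
      cases he with
      | iteC =>
        exact free_Cform _ _ _ _ _ fun l hl hl' =>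
          ⟨h i l (by omega) le_rfl hl hl', h j l h1 h2 hl hl'⟩
      | ite1 => exact hvar j h1 h2
      | ite2 => exact ih (j+1) (by omega) (by omega) (by omega)
    · simp

theorem eval_Cform (I : Interp Fn Pr D) (hatS : ℕ → ℕ → EufTerm Fn Pr) (k i j : ℕ) :
    evalF I (Cform hatS k i j) = true ↔
      (List.range' 1 k).map (fun l => evalT I (hatS i l)) =
      (List.range' 1 k).map (fun l => evalT I (hatS j l)) := by
  unfold Cform
  generalize List.range' 1 k = L
  induction L with
  | nil => simp [evalF]
  | cons a L ih => simp only [List.map_cons, List.foldr_cons, evalF, Bool.and_eq_true, ih,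
      decide_eq_true_eq, List.cons.injEq]

theorem eval_Vterm (I : Interp Fn Pr D) (vf : ℕ → Fn) (hatS : ℕ → ℕ → EufTerm Fn Pr) (k i : ℕ)
    (d : ℕ) : ∀ j, j ≤ i → i - j = d → ∃ m, j ≤ m ∧ m ≤ i ∧
      (List.range' 1 k).map (fun l => evalT I (hatS m l)) =
      (List.range' 1 k).map (fun l => evalT I (hatS i l)) ∧
      (∀ j', j ≤ j' → j' < m → (List.range' 1 k).map (fun l => evalT I (hatS j' l)) ≠
      (List.range' 1 k).map (fun l => evalT I (hatS i l))) ∧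
      evalT I (Vterm vf hatS k i j) = I.fn (vf m) [] := by
  induction d with
  | zero =>
    intro j h2 h3
    refine ⟨i, h2, le_rfl, rfl, fun j' _ _ => by omega, ?_⟩
    rw [Vterm, dif_neg (by omega), evalT_app]; rfl
  | succ d ih =>
    intro j h2 h3
    by_cases hc : evalF I (Cform hatS k i j) = true
    · refine ⟨j, le_rfl, h2, ((eval_Cform ..).1 hc).symm, fun j' _ _ => by omega, ?_⟩
      rw [Vterm, dif_pos (by omega), evalT, if_pos hc, evalT_app]; rfl
    · obtain ⟨m, a, b, c, e, g⟩ := ih (j+1) (by omega) (by omega)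
      refine ⟨m, by omega, b, c, ?_, ?_⟩
      · intro j' q1 q2
        rcases Nat.eq_or_lt_of_le q1 with rfl | q
        · intro hh; exact hc ((eval_Cform ..).2 hh.symm)
        · exact e j' q q2
      · rw [Vterm, dif_pos (by omega), evalT, if_neg hc, g]

section elim
variable {G : EufFormula Fn Pr} {f : Fn} {k n : ℕ} {Ts : ℕ → EufTerm Fn Pr}
  {S : ℕ → ℕ → EufTerm Fn Pr} {vf : ℕ → Fn} {hatS : ℕ → ℕ → EufTerm Fn Pr}

theorem ford_bdd (e : EufExpr Fn Pr) : BddAbove {i | 1 ≤ i ∧ i ≤ n ∧ SubExpr (.t (Ts i)) e} :=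
  ⟨n, fun _ h => h.2.1⟩

theorem le_fordT (E) (i) (h1 : 1 ≤ i) (h2 : i ≤ n) (h : SubExpr (.t (Ts i)) (.t E)) :
    i ≤ fordT n Ts E := le_csSup (ford_bdd (.t E)) ⟨h1, h2, h⟩
theorem le_fordF (E) (i) (h1 : 1 ≤ i) (h2 : i ≤ n) (h : SubExpr (.t (Ts i)) (.f E)) :
    i ≤ fordF n Ts E := le_csSup (ford_bdd (.f E)) ⟨h1, h2, h⟩

theorem sSup_le_nat (s : Set ℕ) (m : ℕ) (h : ∀ i ∈ s, i ≤ m) : sSup s ≤ m := by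
  rcases s.eq_empty_or_nonempty with rfl | hs
  · simp
  · exact csSup_le hs h

theorem fordT_le_n (E) : fordT n Ts E ≤ n := sSup_le_nat _ _ fun _ h => h.2.1
theorem fordF_le_n (E) : fordF n Ts E ≤ n := sSup_le_nat _ _ fun _ h => h.2.1

theorem S_imm (he : ElimHyps G f k n Ts S vf hatS) (i l) (h1 : 1 ≤ i) (h2 : i ≤ n)
    (h3 : 1 ≤ l) (h4 : l ≤ k) : ImmSub (.t (S i l)) (.t (Ts i)) := by
  rw [he.ts_app i h1 h2]
  apply ImmSub.appArg
  apply List.mem_map_of_mem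
  rw [List.mem_range'_1]; omega

theorem ford_S_lt (he : ElimHyps G f k n Ts S vf hatS) (i l) (h1 : 1 ≤ i) (h2 : i ≤ n)
    (h3 : 1 ≤ l) (h4 : l ≤ k) : fordT n Ts (S i l) < i := by
  have hi := S_imm he i l h1 h2 h3 h4
  have : fordT n Ts (S i l) ≤ i - 1 := by
    apply sSup_le_nat
    rintro j ⟨a, b, c⟩
    have hne : j ≠ i := by
      rintro rfl
      have := sub_size c
      have := imm_size hi
      omega
    have := he.ts_order j i a b h1 h2 (sub_child c hi) hne
    omega
  omega

theorem sub_trans {a b c : EufExpr Fn Pr} (h : SubExpr a b) (h' : SubExpr b c) : SubExpr a c :=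
  Relation.ReflTransGen.trans h h'

theorem step_inv (he : ElimHyps G f k n Ts S vf hatS) (m : ℕ) : m ≤ n →
    (∀ E, SubExpr (.t E) (.f G) → ∀ args,
      SubExpr (.t (.app f args)) (.t (stepT Ts vf hatS k m E)) →
      ∃ l, m < l ∧ l ≤ n ∧ SubExpr (.t (Ts l)) (.t E) ∧
        EufTerm.app f args = stepT Ts vf hatS k m (Ts l)) ∧
    (∀ E, SubExpr (.f E) (.f G) → ∀ args,
      SubExpr (.t (.app f args)) (.f (stepF Ts vf hatS k m E)) →
      ∃ l, m < l ∧ l ≤ n ∧ SubExpr (.t (Ts l)) (.f E) ∧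
        EufTerm.app f args = stepT Ts vf hatS k m (Ts l)) := by
  induction m using Nat.strong_induction_on with
  | _ m ih =>
  intro hm
  cases m with
  | zero =>
    constructor
    · intro E hE args h
      obtain ⟨i, h1, h2, h3⟩ := he.ts_complete args (sub_trans h hE)
      exact ⟨i, by omega, h2, h3 ▸ h, h3⟩
    · intro E hE args h
      obtain ⟨i, h1, h2, h3⟩ := he.ts_complete args (sub_trans h hE)
      exact ⟨i, by omega, h2, h3 ▸ h, h3⟩
  | succ m =>
    have hU : Free f (.t (Uterm vf hatS k (m+1))) := by
      apply free_Vterm f vf hatS k (m+1) (fun j a b => he.vf_ne_f j a (by omega)) _ _ 1 le_rfl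
        (by omega) rfl
      intro j l a b c d args hs
      have hlt := ford_S_lt he j l a (by omega) c d
      rw [he.hatS_spec j l a (by omega) c d] at hs
      obtain ⟨q, q1, q2, q3, _⟩ := (ih _ (by omega) (by omega)).1 (S j l)
        (sub_trans (sub_child .refl (S_imm he j l a (by omega) c d))
          (he.ts_occurs j a (by omega))) args hs
      have := le_fordT (Ts := Ts) (S j l) q (by omega) q2 q3
      omega
    have key := subst_app_sub f (stepT Ts vf hatS k m (Ts (m+1))) (Uterm vf hatS k (m+1)) hU
    obtain ⟨ih1, ih2⟩ := ih m (by omega) (by omega)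
    constructor
    · intro E hE args h
      obtain ⟨a', h1, h2, h3⟩ := key.1 _ args h
      obtain ⟨l, q1, q2, q3, q4⟩ := ih1 E hE a' h1
      have : l ≠ m + 1 := by rintro rfl; exact h2 q4
      refine ⟨l, by omega, q2, q3, ?_⟩
      rw [h3, q4]; rfl
    · intro E hE args h
      obtain ⟨a', h1, h2, h3⟩ := key.2 _ args h
      obtain ⟨l, q1, q2, q3, q4⟩ := ih2 E hE a' h1
      have : l ≠ m + 1 := by rintro rfl; exact h2 q4
      refine ⟨l, by omega, q2, q3, ?_⟩
      rw [h3, q4]; rfl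

theorem free_hatT (he : ElimHyps G f k n Ts S vf hatS) (E) (hE : SubExpr (.t E) (.f G)) :
    Free f (.t (hatT n Ts vf hatS k E)) := by
  intro args h
  obtain ⟨l, q1, q2, q3, _⟩ := (step_inv he _ (fordT_le_n E)).1 E hE args h
  have := le_fordT (Ts := Ts) E l (by omega) q2 q3
  omega

theorem free_hatF (he : ElimHyps G f k n Ts S vf hatS) (E) (hE : SubExpr (.f E) (.f G)) :
    Free f (.f (hatF n Ts vf hatS k E)) := by
  intro args h
  obtain ⟨l, q1, q2, q3, _⟩ := (step_inv he _ (fordF_le_n E)).2 E hE args h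
  have := le_fordF (Ts := Ts) E l (by omega) q2 q3
  omega

theorem free_hatS (he : ElimHyps G f k n Ts S vf hatS) (i l) (h1 : 1 ≤ i) (h2 : i ≤ n)
    (h3 : 1 ≤ l) (h4 : l ≤ k) : Free f (.t (hatS i l)) := by
  rw [he.hatS_spec i l h1 h2 h3 h4]
  exact free_hatT he _ (sub_trans (sub_child .refl (S_imm he i l h1 h2 h3 h4))
          (he.ts_occurs i h1 h2))

open Classical in
/-- The extension of the interpretation. -/
noncomputable def extJ (f : Fn) (k n : ℕ) (vf : ℕ → Fn) (hatS : ℕ → ℕ → EufTerm Fn Pr)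
    (Jh : Interp Fn Pr D) : Interp Fn Pr D where
  fn g := if g = f then fun ds =>
      if h : ∃ j, 1 ≤ j ∧ j ≤ n ∧ (List.range' 1 k).map (fun l => evalT Jh (hatS j l)) = ds then
        Jh.fn (vf (Nat.find h)) [] else Jh.fn f ds
    else Jh.fn g
  pr := Jh.pr

theorem step_eval (he : ElimHyps G f k n Ts S vf hatS) (Jh : Interp Fn Pr D) (m : ℕ) : m ≤ n →
    (∀ E, evalT (extJ f k n vf hatS Jh) (stepT Ts vf hatS k m E) =
      evalT (extJ f k n vf hatS Jh) E) ∧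
    (∀ E, evalF (extJ f k n vf hatS Jh) (stepF Ts vf hatS k m E) =
      evalF (extJ f k n vf hatS Jh) E) := by
  have hag := eval_free f (extJ f k n vf hatS Jh) Jh (fun g hg => by simp [extJ, hg]) rfl
  induction m using Nat.strong_induction_on with
  | _ m ih =>
  intro hm
  cases m with
  | zero => exact ⟨fun _ => rfl, fun _ => rfl⟩
  | succ m =>
    obtain ⟨ih1, ih2⟩ := ih m (by omega) (by omega)
    have hargs : ∀ j, 1 ≤ j → j ≤ n →
        (List.range' 1 k).map (fun l => evalT (extJ f k n vf hatS Jh) (hatS j l)) =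
        (List.range' 1 k).map (fun l => evalT Jh (hatS j l)) := by
      intro j a b
      apply List.map_congr_left
      intro l hl
      rw [List.mem_range'_1] at hl
      exact hag.1 _ (free_hatS he j l a b (by omega) (by omega))
    have hAB : evalT (extJ f k n vf hatS Jh) (stepT Ts vf hatS k m (Ts (m+1))) =
        evalT (extJ f k n vf hatS Jh) (Uterm vf hatS k (m+1)) := by
      rw [ih1, he.ts_app (m+1) (by omega) hm, evalT_app, List.map_map]
      have e1 : (List.range' 1 k).map (evalT (extJ f k n vf hatS Jh) ∘ S (m+1)) =
          (List.range' 1 k).map (fun l => evalT Jh (hatS (m+1) l)) := by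
        rw [← hargs (m+1) (by omega) hm]
        apply List.map_congr_left
        intro l hl
        rw [List.mem_range'_1] at hl
        have hlt := ford_S_lt he (m+1) l (by omega) hm (by omega) (by omega)
        rw [he.hatS_spec (m+1) l (by omega) hm (by omega) (by omega)]
        exact ((ih _ (by omega) (by omega)).1 _).symm
      rw [e1]
      obtain ⟨q, q1, q2, q3, q4, q5⟩ :=
        eval_Vterm (extJ f k n vf hatS Jh) vf hatS k (m+1) _ 1 (by omega) rfl
      rw [Uterm, q5]
      rw [hargs q q1 (by omega), hargs (m+1) (by omega) hm] at q3
      have hex : ∃ j, 1 ≤ j ∧ j ≤ n ∧ (List.range' 1 k).map (fun l => evalT Jh (hatS j l)) =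
          (List.range' 1 k).map (fun l => evalT Jh (hatS (m+1) l)) := ⟨q, q1, by omega, q3⟩
      classical
      have hfind : Nat.find hex = q := by
        rw [Nat.find_eq_iff]
        refine ⟨⟨q1, by omega, q3⟩, ?_⟩
        rintro j hj ⟨a, b, c⟩
        apply q4 j a hj
        rw [hargs j a b, hargs (m+1) (by omega) hm, c]
      have hne := he.vf_ne_f q q1 (by omega)
      simp only [extJ, if_true, if_neg hne]
      rw [dif_pos hex]
      congr 2
    have key := eval_subst (extJ f k n vf hatS Jh) _ _ hAB
    exact ⟨fun E => (key.1 _).trans (ih1 E), fun E => (key.2 _).trans (ih2 E)⟩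

end elim
end helpers

/-- Any interpretation `Ĵ` of the symbols in `Ĝ` can be extended to an
interpretation `J` (of the symbols in both `Ĝ` and `G`) such that for every subexpression
`E` of `G`, `J[E] = J[Ê] = Ĵ[Ê]`. -/
theorem hG_G_lemma {Fn Pr D : Type} [Nonempty D] (G : EufFormula Fn Pr) (f : Fn)
    (k n : ℕ) (Ts : ℕ → EufTerm Fn Pr) (S : ℕ → ℕ → EufTerm Fn Pr) (vf : ℕ → Fn)
    (hatS : ℕ → ℕ → EufTerm Fn Pr) (he : ElimHyps G f k n Ts S vf hatS)
    (Jh : Interp Fn Pr D) :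
    ∃ J : Interp Fn Pr D,
      (∀ g : Fn, FnInF g (elimResult G n Ts vf hatS k) → J.fn g = Jh.fn g) ∧
      (∀ p : Pr, PrInF p (elimResult G n Ts vf hatS k) → J.pr p = Jh.pr p) ∧
      (∀ T : EufTerm Fn Pr, TermInF T G →
        evalT J T = evalT J (hatT n Ts vf hatS k T) ∧
        evalT J (hatT n Ts vf hatS k T) = evalT Jh (hatT n Ts vf hatS k T)) ∧
      (∀ E : EufFormula Fn Pr, FormulaInF E G →
        evalF J E = evalF J (hatF n Ts vf hatS k E) ∧
        evalF J (hatF n Ts vf hatS k E) = evalF Jh (hatF n Ts vf hatS k E)) := by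
  classical
  have hag := eval_free f (extJ f k n vf hatS Jh) Jh (fun g hg => by simp [extJ, hg]) rfl
  refine ⟨extJ f k n vf hatS Jh, ?_, fun _ _ => rfl, ?_, ?_⟩
  · rintro g ⟨args, hg⟩
    have hne : g ≠ f := by
      rintro rfl
      obtain ⟨l, q1, q2, _⟩ := (step_inv he n le_rfl).2 G .refl args hg
      omega
    simp [extJ, hne]
  · intro T hT
    exact ⟨((step_eval he Jh _ (fordT_le_n T)).1 T).symm, hag.1 _ (free_hatT he T hT)⟩
  · intro E hE
    exact ⟨((step_eval he Jh _ (fordF_le_n E)).2 E).symm, hag.2 _ (free_hatF he E hE)⟩
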